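/- arXiv:1602.08247 — 5 statements merged into one kernel-verified Lean document; each statement's English description precedes it below -/
import Mathlib

section
/- For every n ≥ 1, the set of extreme points of the permutahedron P_n is exactly {v_σ : σ a permutation of [n]}, and the map σ ↦ v_σ is injective; consequently P_n has exactly n! vertices. -/
open scoped BigOperators

/-- The vertex of the permutahedron associated to a permutation `σ` of `[n]`:
the vector `(σ⁻¹(1), …, σ⁻¹(n))`, with values in `{1, …, n}`. -/
noncomputable def permVec (n : ℕ) (σ : Equiv.Perm (Fin n)) : EuclideanSpace ℝ (Fin n) :=
  WithLp.toLp 2 (fun i => ((σ.symm i : ℕ) + 1 : ℝ))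

/-- The permutahedron `P_n ⊆ ℝⁿ`: the convex hull of the vertices `v_σ`. -/
noncomputable def permutahedron (n : ℕ) : Set (EuclideanSpace ℝ (Fin n)) :=
  convexHull ℝ (Set.range (permVec n))

theorem permVec_injective' (n : ℕ) : Function.Injective (permVec n) := by
  intro σ τ h
  have h2 : ∀ i, σ.symm i = τ.symm i := by
    intro i
    have h3 : permVec n σ i = permVec n τ i := by rw [h]
    simp only [permVec] at h3
    apply Fin.ext
    exact_mod_cast (add_right_cancel h3)
  have h4 : σ.symm = τ.symm := Equiv.ext h2
  exact Equiv.symm_bijective.injective h4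

theorem permVec_norm (n : ℕ) (σ : Equiv.Perm (Fin n)) :
    ‖permVec n σ‖ = ‖permVec n 1‖ := by
  rw [EuclideanSpace.norm_eq, EuclideanSpace.norm_eq]
  congr 1
  exact Equiv.sum_comp σ.symm (fun j : Fin n => ‖((j : ℕ) + 1 : ℝ)‖ ^ 2)

theorem permutahedron_norm_le (n : ℕ) {x : EuclideanSpace ℝ (Fin n)}
    (hx : x ∈ permutahedron n) : ‖x‖ ≤ ‖permVec n 1‖ := by
  have : permutahedron n ⊆ Metric.closedBall 0 ‖permVec n 1‖ := by
    apply convexHull_min _ (convex_closedBall _ _)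
    rintro _ ⟨σ, rfl⟩
    simp [permVec_norm n σ]
  simpa using this hx

theorem permVec_extreme (n : ℕ) :
    Set.extremePoints ℝ (permutahedron n) = Set.range (permVec n) := by
  apply Set.Subset.antisymm
  · exact extremePoints_convexHull_subset
  · rintro _ ⟨σ, rfl⟩
    rw [mem_extremePoints]
    refine ⟨subset_convexHull ℝ _ ⟨σ, rfl⟩, ?_⟩
    rintro x hx y hy ⟨a, b, ha, hb, hab, h⟩
    have hxy : x = y := by
      by_contra hne
      have := norm_combo_lt_of_ne (permutahedron_norm_le n hx) (permutahedron_norm_le n hy)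
        hne ha hb hab
      rw [h, permVec_norm n σ] at this
      exact lt_irrefl _ this
    subst hxy
    rw [← add_smul, hab, one_smul] at h
    exact ⟨h, h⟩

/-- The extreme points of `P_n` are exactly the `v_σ`, the map `σ ↦ v_σ` is injective,
and consequently `P_n` has exactly `n!` vertices. -/
theorem extremePoints_permutahedron (n : ℕ) (hn : 1 ≤ n) :
    Set.extremePoints ℝ (permutahedron n) = Set.range (permVec n) ∧
    Function.Injective (permVec n) ∧
    Nat.card (Set.extremePoints ℝ (permutahedron n)) = Nat.factorial n := by
  refine ⟨permVec_extreme n, permVec_injective' n, ?_⟩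
  rw [permVec_extreme n, Nat.card_range_of_injective (permVec_injective' n),
    Nat.card_eq_fintype_card, Fintype.card_perm, Fintype.card_fin]
end

section
/- Let n ≥ 1, let k ≥ 1, and let (B₁, …, B_k) be an ordered partition of [n] into nonempty pairwise disjoint sets with union [n]. Then the convex hull of {v_τ : τ a permutation of [n] compatible with (B₁, …, B_k)} is an exposed face of the permutahedron P_n. -/
open scoped BigOperators

/-- A permutation `τ` of `[n]` is compatible with the ordered partition `(B 0, …, B (k-1))`
of `[n]` if for all `p < q`, every element of `B p` occurs before every element of `B q`
in the list `τ(1), …, τ(n)`; i.e. `i ∈ B p` and `j ∈ B q` imply `τ⁻¹(i) < τ⁻¹(j)`. -/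
def PermCompatible (n k : ℕ) (B : Fin k → Finset (Fin n)) (τ : Equiv.Perm (Fin n)) : Prop :=
  ∀ p q : Fin k, p < q → ∀ i ∈ B p, ∀ j ∈ B q, τ.symm i < τ.symm j

/-- Points of a convex hull maximizing a functional lie in the hull of the maximizing generators. -/
theorem hull_face_aux {E : Type*} [AddCommGroup E] [Module ℝ E] (S : Set E) (l : E →ₗ[ℝ] ℝ) (M : ℝ)
    (h : ∀ x ∈ S, l x ≤ M) :
    convexHull ℝ S ⊆ {x | l x ≤ M ∧ (l x = M → x ∈ convexHull ℝ {y ∈ S | l y = M})} := by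
  apply convexHull_min
  · intro x hx
    exact ⟨h x hx, fun e => subset_convexHull ℝ _ ⟨hx, e⟩⟩
  · rintro x ⟨hx, hx'⟩ y ⟨hy, hy'⟩ a b ha hb hab
    have e : l (a • x + b • y) = a * l x + b * l y := by simp
    have hM : M = a * M + b * M := by rw [← add_mul, hab, one_mul]
    refine ⟨?_, fun h1 => ?_⟩
    · rw [e]
      nlinarith [mul_le_mul_of_nonneg_left hx ha, mul_le_mul_of_nonneg_left hy hb]
    · rw [e] at h1
      have p1 := mul_le_mul_of_nonneg_left hx ha
      have p2 := mul_le_mul_of_nonneg_left hy hb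
      rcases ha.eq_or_lt with rfl | ha'
      · have hb1 : b = 1 := by linarith
        subst hb1
        simp only [zero_smul, one_smul, zero_add]
        exact hy' (by linarith)
      rcases hb.eq_or_lt with rfl | hb'
      · have ha1 : a = 1 := by linarith
        subst ha1
        simp only [zero_smul, one_smul, add_zero]
        exact hx' (by linarith)
      have q1 : l x = M := mul_left_cancel₀ ha'.ne' (by linarith)
      have q2 : l y = M := mul_left_cancel₀ hb'.ne' (by linarith)
      exact convex_convexHull ℝ _ (hx' q1) (hy' q2) ha hb hab

/-- For any ordered partition `(B 0, …, B (k-1))` of `[n]` into nonempty pairwise disjoint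
sets, the convex hull of the vertices `v_τ` for `τ` compatible with the partition is an
exposed face of the permutahedron `P_n`. -/
theorem orderedPartition_face_isExposed (n k : ℕ) (hn : 1 ≤ n) (hk : 1 ≤ k)
    (B : Fin k → Finset (Fin n)) (hne : ∀ r, (B r).Nonempty)
    (hdisj : ∀ p q, p ≠ q → Disjoint (B p) (B q))
    (hcov : Finset.univ.biUnion B = Finset.univ) :
    IsExposed ℝ (permutahedron n)
      (convexHull ℝ (permVec n '' {τ | PermCompatible n k B τ})) := by
  intro hB
  obtain ⟨-, ⟨τ₀, hτ₀, rfl⟩⟩ := convexHull_nonempty_iff.1 hB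
  have hex : ∀ i : Fin n, ∃ p, i ∈ B p := fun i => by
    have : i ∈ Finset.univ.biUnion B := by rw [hcov]; exact Finset.mem_univ i
    simpa using this
  choose c hc using hex
  have huniq : ∀ i p, i ∈ B p → p = c i := fun i p hi => by
    by_contra hne'
    exact Finset.disjoint_left.1 (hdisj _ _ hne') hi (hc i)
  let f : Fin n → ℝ := fun i => ((c i : ℕ) : ℝ)
  have hiff : ∀ σ : Equiv.Perm (Fin n), PermCompatible n k B σ ↔
      Monovary f (fun i => permVec n σ i) := by
    intro σ
    constructor
    · intro h i j hij
      by_contra hlt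
      have hlt' : c j < c i := by simpa [f] using hlt
      have := h _ _ hlt' j (hc j) i (hc i)
      have hij' : σ.symm i < σ.symm j := by simpa [permVec] using hij
      exact absurd hij' this.not_gt
    · intro h p q hpq i hi j hj
      rw [huniq i p hi, huniq j q hj] at hpq
      by_contra hlt
      have hne' : σ.symm j ≠ σ.symm i := by
        intro e
        have := σ.symm.injective e
        subst this
        exact lt_irrefl _ hpq
      have hlt' : σ.symm j < σ.symm i := lt_of_le_of_ne (not_lt.1 hlt) hne'
      have h1 : permVec n σ j < permVec n σ i := by simpa [permVec] using hlt'
      have h2 : f j ≤ f i := h h1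
      have h3 : c j ≤ c i := by simpa [f] using h2
      exact absurd hpq h3.not_gt
  let l : StrongDual ℝ (EuclideanSpace ℝ (Fin n)) :=
    ∑ i, f i • (EuclideanSpace.proj i : EuclideanSpace ℝ (Fin n) →L[ℝ] ℝ)
  have hl : ∀ x, l x = ∑ i, f i • x i := fun x => by simp [l]
  have hm := (hiff τ₀).1 hτ₀
  have hperm : ∀ σ : Equiv.Perm (Fin n),
      (fun i => permVec n σ i) = (fun i => permVec n τ₀ i) ∘ (σ.symm.trans τ₀) := by
    intro σ; ext i; simp [permVec]
  have hle : ∀ σ, l (permVec n σ) ≤ l (permVec n τ₀) := fun σ => by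
    have := hm.sum_smul_comp_perm_le_sum_smul (σ := σ.symm.trans τ₀)
    rw [hl, hl]
    refine le_trans (le_of_eq ?_) this
    exact Finset.sum_congr rfl fun i _ => congrArg (f i • ·) (congrFun (hperm σ) i)
  have heq : ∀ σ, l (permVec n σ) = l (permVec n τ₀) ↔ PermCompatible n k B σ := fun σ => by
    have := hm.sum_smul_comp_perm_eq_sum_smul_iff (σ := σ.symm.trans τ₀)
    rw [← hperm σ, ← hiff σ] at this
    rw [← this, hl, hl]
    have e : ∑ i, f i • permVec n σ i = ∑ i, f i • permVec n τ₀ ((σ.symm.trans τ₀) i) :=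
      Finset.sum_congr rfl fun i _ => congrArg (f i • ·) (congrFun (hperm σ) i)
    rw [e]
  have hset : {y ∈ Set.range (permVec n) | l y = l (permVec n τ₀)} =
      permVec n '' {τ | PermCompatible n k B τ} := by
    ext y
    constructor
    · rintro ⟨⟨σ, rfl⟩, h⟩
      exact ⟨σ, (heq σ).1 h, rfl⟩
    · rintro ⟨σ, h, rfl⟩
      exact ⟨⟨σ, rfl⟩, (heq σ).2 h⟩
  have key := hull_face_aux (Set.range (permVec n)) (l : EuclideanSpace ℝ (Fin n) →ₗ[ℝ] ℝ)
    (l (permVec n τ₀)) (by rintro _ ⟨σ, rfl⟩; exact hle σ)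
  have hmem : permVec n τ₀ ∈ permutahedron n := subset_convexHull ℝ _ ⟨τ₀, rfl⟩
  refine ⟨l, Set.Subset.antisymm ?_ ?_⟩
  · intro x hx
    refine ⟨convexHull_mono (Set.image_subset_range _ _) hx, fun y hy => ?_⟩
    have hx1 : l x = l (permVec n τ₀) := by
      have hc' : Convex ℝ {x | l x = l (permVec n τ₀)} :=
        convex_hyperplane l.toLinearMap.isLinear _
      refine convexHull_min ?_ hc' hx
      rintro _ ⟨σ, h, rfl⟩
      exact (heq σ).2 h
    rw [hx1]
    exact (key hy).1
  · rintro x ⟨hx, hmax⟩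
    have h1 := (key hx).2 (le_antisymm (key hx).1 (hmax _ hmem))
    rw [← hset]
    exact h1
end

section
/- Let n ≥ 1, let k ≥ 1, and let (B₁, …, B_k) be an ordered partition of [n] into nonempty pairwise disjoint sets with union [n], with m_r = |B_r|. Then there exists an injective affine map f : ℝ^{m₁} × ℝ^{m₂} × ⋯ × ℝ^{m_k} → ℝⁿ whose image of the product P_{m₁} × P_{m₂} × ⋯ × P_{m_k} is exactly the convex hull of {v_τ : τ compatible with (B₁, …, B_k)}. In particular, this face of P_n of dimension n − k is affinely isomorphic to P_{m₁} × P_{m₂} × ⋯ × P_{m_k}. -/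
open scoped BigOperators

theorem face_product_aux (n k : ℕ) (B : Fin k → Finset (Fin n))
    (hdisj : ∀ p q, p ≠ q → Disjoint (B p) (B q))
    (hcov : Finset.univ.biUnion B = Finset.univ) :
    ∃ e : (Σ r : Fin k, Fin ((B r).card)) ≃ Fin n, ∀ i r, i ∈ B r ↔ (e.symm i).1 = r := by
  have hmem : ∀ s : (Σ r : Fin k, Fin ((B r).card)),
      (B s.1).orderEmbOfFin rfl s.2 ∈ B s.1 := fun s => Finset.orderEmbOfFin_mem _ _ _
  have huniq : ∀ i p q, i ∈ B p → i ∈ B q → p = q := by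
    intro i p q hp hq
    by_contra h
    exact Finset.disjoint_left.mp (hdisj p q h) hp hq
  have hbij : Function.Bijective
      (fun s : (Σ r : Fin k, Fin ((B r).card)) => (B s.1).orderEmbOfFin rfl s.2) := by
    constructor
    · rintro ⟨p, a⟩ ⟨q, b⟩ h
      have h1 := hmem ⟨p, a⟩
      have h2 := hmem ⟨q, b⟩
      simp only at h h1 h2
      rw [h] at h1
      obtain rfl := huniq _ _ _ h1 h2
      simpa using h
    · intro i
      have : i ∈ Finset.univ.biUnion B := by rw [hcov]; exact Finset.mem_univ _
      obtain ⟨r, -, hr⟩ := Finset.mem_biUnion.mp this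
      have : i ∈ Set.range ((B r).orderEmbOfFin rfl) := by
        rw [Finset.range_orderEmbOfFin]; exact hr
      obtain ⟨j, hj⟩ := this
      exact ⟨⟨r, j⟩, hj⟩
  refine ⟨Equiv.ofBijective _ hbij, ?_⟩
  intro i r
  have key : i ∈ B ((Equiv.ofBijective _ hbij).symm i).1 := by
    have h1 := hmem ((Equiv.ofBijective _ hbij).symm i)
    have h2 := (Equiv.ofBijective _ hbij).apply_symm_apply i
    rw [Equiv.ofBijective_apply] at h2
    rwa [h2] at h1
  constructor
  · intro h
    exact huniq _ _ _ key h
  · rintro rfl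
    exact key

theorem orderedPartition_face_product (n k : ℕ) (hn : 1 ≤ n) (hk : 1 ≤ k)
    (B : Fin k → Finset (Fin n)) (hne : ∀ r, (B r).Nonempty)
    (hdisj : ∀ p q, p ≠ q → Disjoint (B p) (B q))
    (hcov : Finset.univ.biUnion B = Finset.univ) :
    ∃ f : ((r : Fin k) → EuclideanSpace ℝ (Fin ((B r).card))) →ᵃ[ℝ]
        EuclideanSpace ℝ (Fin n),
      Function.Injective f ∧
      f '' {x | ∀ r : Fin k, x r ∈ permutahedron ((B r).card)} =
        convexHull ℝ (permVec n '' {τ | PermCompatible n k B τ}) := by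
  obtain ⟨e, he⟩ := face_product_aux n k B hdisj hcov
  have he' : ∀ r j, e ⟨r, j⟩ ∈ B r := fun r j => by rw [he]; simp
  let off : Fin k → ℕ := fun r => (Finset.univ.filter fun i => (e.symm i).1 < r).card
  have h1 : ∀ r, off r + (B r).card = (Finset.univ.filter fun i => (e.symm i).1 ≤ r).card := by
    intro r
    rw [← Finset.card_union_of_disjoint]
    · congr 1
      ext i
      simp [he, le_iff_lt_or_eq]
    · rw [Finset.disjoint_left]
      intro i hi hi'
      rw [he] at hi'
      simp [hi'] at hi
  have h2 : ∀ p q, p < q → off p + (B p).card ≤ off q := by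
    intro p q hpq
    rw [h1]
    apply Finset.card_le_card
    intro i
    simp only [Finset.mem_filter, Finset.mem_univ, true_and]
    exact fun h => lt_of_le_of_lt h hpq
  have h3 : ∀ r, off r + (B r).card ≤ n := by
    intro r
    rw [h1]
    exact (Finset.card_le_univ _).trans (by simp)
  let L : ((r : Fin k) → EuclideanSpace ℝ (Fin ((B r).card))) →ₗ[ℝ] EuclideanSpace ℝ (Fin n) :=
    { toFun := fun x => WithLp.toLp 2 (fun i => x (e.symm i).1 (e.symm i).2)
      map_add' := by intro x y; ext i; simp
      map_smul' := by intro c x; ext i; simp }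
  let f : ((r : Fin k) → EuclideanSpace ℝ (Fin ((B r).card))) →ᵃ[ℝ] EuclideanSpace ℝ (Fin n) :=
    { toFun := fun x => L x + WithLp.toLp 2 (fun i => (off (e.symm i).1 : ℝ))
      linear := L
      map_vadd' := by intro x y; simp [add_assoc] }
  have hf : ∀ x i, f x i = x (e.symm i).1 (e.symm i).2 + off (e.symm i).1 := fun x i => rfl
  refine ⟨f, ?_, ?_⟩
  · intro x y hxy
    funext r
    ext j
    have := congrArg (fun v => v (e ⟨r, j⟩)) hxy
    simp only [hf] at this
    rw [Equiv.symm_apply_apply] at this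
    simpa using this
  have hset : {x : (r : Fin k) → EuclideanSpace ℝ (Fin ((B r).card)) |
      ∀ r : Fin k, x r ∈ permutahedron ((B r).card)} =
      convexHull ℝ (Set.univ.pi fun r => Set.range (permVec (B r).card)) := by
    rw [convexHull_pi]
    ext x
    simp [permutahedron]
  rw [hset, AffineMap.image_convexHull]
  congr 1
  ext v
  constructor
  · rintro ⟨x, hx, rfl⟩
    have hx' : ∀ r, ∃ σ, permVec (B r).card σ = x r := fun r => hx r (Set.mem_univ r)
    choose σ hσ using hx'
    let g : (Σ r : Fin k, Fin ((B r).card)) → Fin n := fun s =>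
      ⟨off s.1 + ((σ s.1).symm s.2 : ℕ), by
        have := h3 s.1
        have := ((σ s.1).symm s.2).isLt
        omega⟩
    have glt : ∀ s t, s.1 < t.1 → g s < g t := by
      intro s t hst
      have := h2 _ _ hst
      have := ((σ s.1).symm s.2).isLt
      simp only [g, Fin.lt_def]
      omega
    have ginj : Function.Injective g := by
      intro s t hst
      rcases lt_trichotomy s.1 t.1 with h | h | h
      · exact absurd hst (glt _ _ h).ne
      · obtain ⟨p, a⟩ := s
        obtain ⟨q, b⟩ := t
        obtain rfl : p = q := h
        simp only [g, Fin.mk.injEq, add_right_inj] at hst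
        have := (σ p).symm.injective (Fin.ext hst)
        rw [this]
      · exact absurd hst (glt _ _ h).ne'
    have gbij : Function.Bijective (g ∘ e.symm) :=
      Finite.injective_iff_bijective.mp (ginj.comp e.symm.injective)
    refine ⟨(Equiv.ofBijective _ gbij).symm, ?_, ?_⟩
    · intro p q hpq i hi j hj
      rw [he] at hi hj
      rw [Equiv.symm_symm, Equiv.ofBijective_apply, Equiv.ofBijective_apply]
      apply glt
      rw [hi, hj]
      exact hpq
    · ext i
      rw [hf, ← hσ]
      simp only [permVec, Equiv.symm_symm, Equiv.ofBijective_apply, Function.comp, g]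
      push_cast
      ring
  · rintro ⟨τ, hτ, rfl⟩
    have hlt : ∀ i j, (e.symm i).1 < (e.symm j).1 → τ.symm i < τ.symm j := fun i j h =>
      hτ _ _ h i ((he _ _).2 rfl) j ((he _ _).2 rfl)
    have lo : ∀ i, off (e.symm i).1 ≤ (τ.symm i : ℕ) := by
      intro i
      rw [← Fin.card_Iio (τ.symm i)]
      apply Finset.card_le_card_of_injOn τ.symm
      · intro j hj
        simp only [Finset.coe_filter, Finset.mem_univ, true_and, Set.mem_setOf_eq] at hj
        simpa using hlt _ _ hj
      · exact τ.symm.injective.injOn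
    have hi : ∀ i, (τ.symm i : ℕ) < off (e.symm i).1 + (B (e.symm i).1).card := by
      intro i
      rw [h1, ← Nat.succ_le_iff, Nat.succ_eq_add_one, ← Fin.card_Iic (τ.symm i)]
      apply Finset.card_le_card_of_injOn τ
      · intro j hj
        simp only [Finset.coe_Iic, Set.mem_Iic] at hj
        simp only [Finset.coe_filter, Finset.mem_univ, true_and, Set.mem_setOf_eq]
        by_contra h
        have := hlt _ _ (not_le.mp h)
        rw [Equiv.symm_apply_apply] at this
        exact absurd hj (not_le.mpr this)
      · exact τ.injective.injOn
    have lo' : ∀ r j, off r ≤ (τ.symm (e ⟨r, j⟩) : ℕ) := by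
      intro r j
      have := lo (e ⟨r, j⟩)
      rwa [Equiv.symm_apply_apply] at this
    have hi' : ∀ r j, (τ.symm (e ⟨r, j⟩) : ℕ) < off r + (B r).card := by
      intro r j
      have := hi (e ⟨r, j⟩)
      rwa [Equiv.symm_apply_apply] at this
    let s : ∀ r, Fin (B r).card → Fin (B r).card := fun r j =>
      ⟨(τ.symm (e ⟨r, j⟩) : ℕ) - off r, by
        have := lo' r j
        have := hi' r j
        omega⟩
    have sbij : ∀ r, Function.Bijective (s r) := by
      intro r
      apply Finite.injective_iff_bijective.mp
      intro a b hab
      simp only [s, Fin.mk.injEq] at hab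
      have := lo' r a
      have := lo' r b
      have h : τ.symm (e ⟨r, a⟩) = τ.symm (e ⟨r, b⟩) := Fin.ext (by omega)
      simpa using h
    refine ⟨fun r => permVec _ (Equiv.ofBijective _ (sbij r)).symm, fun r _ => ⟨_, rfl⟩, ?_⟩
    ext i
    rw [hf]
    obtain ⟨⟨r, j⟩, rfl⟩ := e.surjective i
    rw [Equiv.symm_apply_apply]
    simp only [permVec, Equiv.symm_symm, Equiv.ofBijective_apply, s]
    rw [Nat.cast_sub (lo' r j)]
    ring
end

section
/- Let m ≥ 2 and ε > 0. Define the collar C_ε = {(x₁, …, x_{m−1}, x_m − δ) ∈ ℝ^m : (x₁,…,x_m) ∈ S^{m−1}₋, 0 ≤ δ ≤ ε} and the extended cell Ext = D^m ∪ C_ε ⊆ ℝ^m. Then there exists a continuous map H : Ext × [0,1] → Ext such that: (i) H(y,0) = y for all y ∈ Ext; (ii) H(y,t) = y for every y in the topological frontier of Ext in ℝ^m and every t ∈ [0,1]; (iii) H(x,t) = x for all x ∈ S^{m−1}₊ and all t, and the image of D^m under H(·,1) is S^{m−1}₊ (so H deformation retracts D^m onto the closed upper hemisphere); and (iv) H(·,1)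 restricted to C_ε is a homeomorphism from C_ε onto Ext. -/
open scoped BigOperators

namespace ExtCell

variable {m : ℕ}

/-- squared norm of the horizontal part -/
noncomputable def q (l : Fin m) (y : EuclideanSpace ℝ (Fin m)) : ℝ :=
  ∑ i ∈ Finset.univ.erase l, (y i) ^ 2

/-- half height of the ball over the point -/
noncomputable def R (l : Fin m) (y : EuclideanSpace ℝ (Fin m)) : ℝ := Real.sqrt (1 - q l y)

/-- replace the last coordinate -/
noncomputable def V (l : Fin m) (y : EuclideanSpace ℝ (Fin m)) (c : ℝ) :
    EuclideanSpace ℝ (Fin m) := WithLp.toLp 2 (Function.update y l c)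

lemma V_last (l : Fin m) (y : EuclideanSpace ℝ (Fin m)) (c : ℝ) : V l y c l = c := by
  simp [V]

lemma V_V (l : Fin m) (y : EuclideanSpace ℝ (Fin m)) (c d : ℝ) : V l (V l y c) d = V l y d := by
  simp [V]

lemma V_self (l : Fin m) (y : EuclideanSpace ℝ (Fin m)) : V l y (y l) = y := by
  simp [V]

lemma q_V (l : Fin m) (y : EuclideanSpace ℝ (Fin m)) (c : ℝ) : q l (V l y c) = q l y := by
  unfold q
  refine Finset.sum_congr rfl fun i hi => ?_
  have : i ≠ l := Finset.ne_of_mem_erase hi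
  simp [V, this]

lemma R_V (l : Fin m) (y : EuclideanSpace ℝ (Fin m)) (c : ℝ) : R l (V l y c) = R l y := by
  simp [R, q_V]

lemma norm_sq (l : Fin m) (y : EuclideanSpace ℝ (Fin m)) : ‖y‖ ^ 2 = q l y + (y l) ^ 2 := by
  rw [EuclideanSpace.real_norm_sq_eq, q, Finset.sum_erase_add _ _ (Finset.mem_univ l)]

lemma continuous_q (l : Fin m) : Continuous (q l) := by
  unfold q; fun_prop

lemma continuous_R (l : Fin m) : Continuous (R l) := by
  have := continuous_q l
  unfold R; fun_prop

lemma continuous_V (l : Fin m) :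
    Continuous fun z : EuclideanSpace ℝ (Fin m) × ℝ => V l z.1 z.2 := by
  unfold V
  refine (PiLp.continuous_toLp 2 _).comp ?_
  refine Continuous.update ?_ l continuous_snd
  exact (PiLp.continuous_ofLp 2 _).comp continuous_fst

lemma R_nonneg (l : Fin m) (y : EuclideanSpace ℝ (Fin m)) : 0 ≤ R l y := Real.sqrt_nonneg _

lemma R_sq (l : Fin m) (y : EuclideanSpace ℝ (Fin m)) (h : q l y ≤ 1) :
    R l y ^ 2 = 1 - q l y := Real.sq_sqrt (by linarith)

lemma mem_D (l : Fin m) (y : EuclideanSpace ℝ (Fin m)) :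
    ‖y‖ ≤ 1 ↔ q l y ≤ 1 ∧ -R l y ≤ y l ∧ y l ≤ R l y := by
  have h1 := norm_sq l y
  have h2 := R_nonneg l y
  have h0 := norm_nonneg y
  constructor
  · intro h
    have hq : q l y ≤ 1 := by nlinarith
    refine ⟨hq, ?_⟩
    have h3 := R_sq l y hq
    exact abs_le.1 (abs_le_of_sq_le_sq (by nlinarith) h2)
  · rintro ⟨hq, ha, hb⟩
    have h3 := R_sq l y hq
    nlinarith

lemma mem_Sp (l : Fin m) (y : EuclideanSpace ℝ (Fin m)) :
    (‖y‖ = 1 ∧ 0 ≤ y l) ↔ q l y ≤ 1 ∧ y l = R l y := by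
  have h1 := norm_sq l y
  have h2 := R_nonneg l y
  have h0 := norm_nonneg y
  constructor
  · rintro ⟨h, hs⟩
    have hq : q l y ≤ 1 := by rw [h] at h1; nlinarith [sq_nonneg (y l)]
    have h3 := R_sq l y hq
    rw [h] at h1
    exact ⟨hq, (sq_eq_sq₀ hs h2).1 (by linarith)⟩
  · rintro ⟨hq, ha⟩
    have h3 := R_sq l y hq
    rw [ha] at h1
    exact ⟨(sq_eq_sq₀ h0 zero_le_one).1 (by linarith), ha ▸ h2⟩

lemma mem_Sm (l : Fin m) (y : EuclideanSpace ℝ (Fin m)) :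
    (‖y‖ = 1 ∧ y l ≤ 0) ↔ q l y ≤ 1 ∧ y l = -R l y := by
  have h1 := norm_sq l y
  have h2 := R_nonneg l y
  have h0 := norm_nonneg y
  constructor
  · rintro ⟨h, hs⟩
    have hq : q l y ≤ 1 := by rw [h] at h1; nlinarith [sq_nonneg (y l)]
    have h3 := R_sq l y hq
    rw [h] at h1
    have := (sq_eq_sq₀ (neg_nonneg.2 hs) h2).1 (by linarith [neg_sq (y l)])
    exact ⟨hq, by linarith⟩
  · rintro ⟨hq, ha⟩
    have h3 := R_sq l y hq
    rw [ha] at h1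
    exact ⟨(sq_eq_sq₀ h0 zero_le_one).1 (by linarith [neg_sq (R l y)]), by linarith⟩

lemma mem_C (l : Fin m) (ε : ℝ) (y : EuclideanSpace ℝ (Fin m)) :
    (∃ x : EuclideanSpace ℝ (Fin m), (‖x‖ = 1 ∧ x l ≤ 0) ∧ ∃ δ : ℝ, 0 ≤ δ ∧ δ ≤ ε ∧
            y = V l x (x l - δ)) ↔
      q l y ≤ 1 ∧ -R l y - ε ≤ y l ∧ y l ≤ -R l y := by
  constructor
  · rintro ⟨x, hx, δ, h0, h1, rfl⟩
    obtain ⟨hq, hs⟩ := (mem_Sm l x).1 hx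
    rw [q_V, R_V, V_last]
    exact ⟨hq, by linarith, by linarith⟩
  · rintro ⟨hq, ha, hb⟩
    refine ⟨V l y (-R l y), (mem_Sm l _).2 ?_, -R l y - y l, by linarith, by linarith, ?_⟩
    · rw [q_V, R_V, V_last]; exact ⟨hq, rfl⟩
    · rw [V_last, V_V, sub_sub_cancel, V_self]

/-- the time one map on the last coordinate, by fibre half height and height -/
noncomputable def f (ε r s : ℝ) : ℝ := min r (-r - ε + (s + r + ε) * (2 * r + ε) / ε)

/-- its inverse -/
noncomputable def g (ε r u : ℝ) : ℝ := -r - ε + (u + r + ε) * ε / (2 * r + ε)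

lemma f_top {ε r s : ℝ} (hε : 0 < ε) (hr : 0 ≤ r) (hs : -r ≤ s) : f ε r s = r := by
  refine min_eq_left ?_
  have : 2 * r + ε ≤ (s + r + ε) * (2 * r + ε) / ε := by
    rw [le_div_iff₀ hε]; nlinarith
  linarith

lemma f_bot {ε r s : ℝ} (hε : 0 < ε) (hr : 0 ≤ r) (hs : s ≤ -r) :
    f ε r s = -r - ε + (s + r + ε) * (2 * r + ε) / ε := by
  refine min_eq_right ?_
  have : (s + r + ε) * (2 * r + ε) / ε ≤ 2 * r + ε := by
    rw [div_le_iff₀ hε]; nlinarith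
  linarith

lemma f_le {ε r s : ℝ} : f ε r s ≤ r := min_le_left _ _

lemma le_f {ε r s : ℝ} (hε : 0 < ε) (hr : 0 ≤ r) (hs : -r - ε ≤ s) : -r - ε ≤ f ε r s := by
  refine le_min (by linarith) ?_
  have : 0 ≤ (s + r + ε) * (2 * r + ε) / ε :=
    div_nonneg (mul_nonneg (by linarith) (by linarith)) hε.le
  linarith

lemma g_f {ε r s : ℝ} (hε : 0 < ε) (hr : 0 ≤ r) (hs : s ≤ -r) : g ε r (f ε r s) = s := by
  rw [f_bot hε hr hs, g]
  have : 2 * r + ε ≠ 0 := by positivity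
  field_simp
  ring

lemma g_le {ε r u : ℝ} (hε : 0 < ε) (hr : 0 ≤ r) (hu : u ≤ r) : g ε r u ≤ -r := by
  have h : 0 < 2 * r + ε := by positivity
  have : (u + r + ε) * ε / (2 * r + ε) ≤ ε := by
    rw [div_le_iff₀ h]; nlinarith
  unfold g; linarith

lemma le_g {ε r u : ℝ} (hε : 0 < ε) (hr : 0 ≤ r) (hu : -r - ε ≤ u) : -r - ε ≤ g ε r u := by
  have : 0 ≤ (u + r + ε) * ε / (2 * r + ε) :=
    div_nonneg (mul_nonneg (by linarith) hε.le) (by linarith)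
  unfold g; linarith

lemma f_g {ε r u : ℝ} (hε : 0 < ε) (hr : 0 ≤ r) (hu : u ≤ r) : f ε r (g ε r u) = u := by
  rw [f_bot hε hr (g_le hε hr hu), g]
  have : 2 * r + ε ≠ 0 := by positivity
  field_simp
  ring

lemma f_fix {ε r s : ℝ} (hε : 0 < ε) (hr : 0 ≤ r) (hs : s ≤ r)
    (h : r = 0 ∨ s = r ∨ s = -r - ε) : f ε r s = s := by
  rcases h with rfl | rfl | rfl
  · rw [f_bot hε le_rfl (by linarith)]; field_simp; ring
  · exact f_top hε hr (by linarith)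
  · rw [f_bot hε hr (by linarith)]; ring

end ExtCell

/-- For `m ≥ 2` and `ε > 0`, the extended cell `Ext = D^m ∪ C_ε`, where `C_ε` is the
collar `{(x₁,…,x_{m−1}, x_m − δ) : (x₁,…,x_m) ∈ S^{m−1}₋, 0 ≤ δ ≤ ε}`, admits a homotopy
`H` which (i) starts at the identity, (ii) is the identity on the frontier of `Ext` at
all times, (iii) is the identity on `S^{m−1}₊` at all times and at time `1` retracts
`D^m` onto `S^{m−1}₊`, and (iv) at time `1` restricts to a homeomorphism from the collar
`C_ε` onto `Ext`. -/
theorem extended_cell_homotopy (m : ℕ) (hm : 2 ≤ m) (ε : ℝ) (hε : 0 < ε) :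
    ∀ last : Fin m, last = ⟨m - 1, by omega⟩ →
    ∀ D : Set (EuclideanSpace ℝ (Fin m)), D = {x | ‖x‖ ≤ 1} →
    ∀ Splus : Set (EuclideanSpace ℝ (Fin m)), Splus = {x | ‖x‖ = 1 ∧ 0 ≤ x last} →
    ∀ Sminus : Set (EuclideanSpace ℝ (Fin m)), Sminus = {x | ‖x‖ = 1 ∧ x last ≤ 0} →
    ∀ C : Set (EuclideanSpace ℝ (Fin m)),
      C = {y | ∃ x ∈ Sminus, ∃ δ : ℝ, 0 ≤ δ ∧ δ ≤ ε ∧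
            y = WithLp.toLp 2 (Function.update x last (x last - δ))} →
    ∀ Ext : Set (EuclideanSpace ℝ (Fin m)), Ext = D ∪ C →
    ∃ H : EuclideanSpace ℝ (Fin m) × ℝ → EuclideanSpace ℝ (Fin m),
      ContinuousOn H (Ext ×ˢ Set.Icc (0 : ℝ) 1) ∧
      (∀ y ∈ Ext, ∀ t ∈ Set.Icc (0 : ℝ) 1, H (y, t) ∈ Ext) ∧
      (∀ y ∈ Ext, H (y, 0) = y) ∧
      (∀ y ∈ frontier Ext, ∀ t ∈ Set.Icc (0 : ℝ) 1, H (y, t) = y) ∧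
      (∀ x ∈ Splus, ∀ t ∈ Set.Icc (0 : ℝ) 1, H (x, t) = x) ∧
      ((fun x => H (x, 1)) '' D = Splus) ∧
      ∃ e : C ≃ₜ Ext, ∀ y : C, (e y : EuclideanSpace ℝ (Fin m)) = H (y.val, 1) := by
  intro last _ D hD Splus hSp Sminus hSm C hC Ext hExt
  have hmD : ∀ y, y ∈ D ↔ ExtCell.q last y ≤ 1 ∧ -ExtCell.R last y ≤ y last ∧
      y last ≤ ExtCell.R last y := fun y => by rw [hD]; exact ExtCell.mem_D last y
  have hmS : ∀ y, y ∈ Splus ↔ ExtCell.q last y ≤ 1 ∧ y last = ExtCell.R last y :=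
    fun y => by rw [hSp]; exact ExtCell.mem_Sp last y
  have hmC : ∀ y, y ∈ C ↔ ExtCell.q last y ≤ 1 ∧ -ExtCell.R last y - ε ≤ y last ∧
      y last ≤ -ExtCell.R last y := fun y => by
    rw [hC, hSm]; exact ExtCell.mem_C last ε y
  have hR := ExtCell.R_nonneg last
  have hmE : ∀ y, y ∈ Ext ↔ ExtCell.q last y ≤ 1 ∧ -ExtCell.R last y - ε ≤ y last ∧
      y last ≤ ExtCell.R last y := fun y => by
    rw [hExt, Set.mem_union, hmD, hmC]
    have := hR y
    constructor
    · rintro (⟨a, b, c⟩ | ⟨a, b, c⟩)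
      · exact ⟨a, by linarith, by linarith⟩
      · exact ⟨a, by linarith, by linarith⟩
    · rintro ⟨a, b, c⟩
      rcases le_total (-ExtCell.R last y) (y last) with h | h
      · exact Or.inl ⟨a, h, c⟩
      · exact Or.inr ⟨a, b, h⟩
  clear hD hSp hSm hC hExt
  have cR := ExtCell.continuous_R last
  have cq := ExtCell.continuous_q last
  have cV := ExtCell.continuous_V last
  have cl : Continuous fun y : EuclideanSpace ℝ (Fin m) => y last := by fun_prop
  have cf : Continuous fun y : EuclideanSpace ℝ (Fin m) =>
      ExtCell.f ε (ExtCell.R last y) (y last) := by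
    unfold ExtCell.f; fun_prop
  have cg : Continuous fun y : EuclideanSpace ℝ (Fin m) =>
      ExtCell.g ε (ExtCell.R last y) (y last) := by
    unfold ExtCell.g
    refine Continuous.add (by fun_prop) (Continuous.div (by fun_prop) (by fun_prop) ?_)
    intro y
    have := hR y
    positivity
  have hclosed : IsClosed Ext := by
    have : Ext = {y | ExtCell.q last y ≤ 1} ∩ ({y | -ExtCell.R last y - ε ≤ y last} ∩
        {y | y last ≤ ExtCell.R last y}) := Set.ext fun y => hmE y
    rw [this]
    exact (isClosed_le cq continuous_const).inter
      ((isClosed_le (by fun_prop) cl).inter (isClosed_le cl cR))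
  have hfr : ∀ y ∈ frontier Ext, y ∈ Ext ∧ (ExtCell.R last y = 0 ∨ y last = ExtCell.R last y ∨
      y last = -ExtCell.R last y - ε) := by
    intro y hy
    have hyE : y ∈ Ext := hclosed.frontier_subset hy
    refine ⟨hyE, ?_⟩
    by_contra! hcon
    obtain ⟨h1, h2, h3⟩ := hcon
    obtain ⟨a, b, c⟩ := (hmE y).1 hyE
    have hq1 : ExtCell.q last y < 1 := by
      refine lt_of_le_of_ne a fun h => h1 ?_
      simp [ExtCell.R, h]
    have hopen : IsOpen ({y | ExtCell.q last y < 1} ∩ ({y | -ExtCell.R last y - ε < y last} ∩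
        {y | y last < ExtCell.R last y})) :=
      (isOpen_lt cq continuous_const).inter
        ((isOpen_lt (by fun_prop) cl).inter (isOpen_lt cl cR))
    have hsub : ({y | ExtCell.q last y < 1} ∩ ({y | -ExtCell.R last y - ε < y last} ∩
        {y | y last < ExtCell.R last y})) ⊆ Ext := fun z hz =>
      (hmE z).2 ⟨le_of_lt hz.1, le_of_lt hz.2.1, le_of_lt hz.2.2⟩
    exact hy.2 (interior_maximal hsub hopen
      ⟨hq1, lt_of_le_of_ne b (Ne.symm h3), lt_of_le_of_ne c h2⟩)
  have H1 : ∀ y : EuclideanSpace ℝ (Fin m),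
      ExtCell.V last y ((1 - (1:ℝ)) * y last + 1 * ExtCell.f ε (ExtCell.R last y) (y last))
        = ExtCell.V last y (ExtCell.f ε (ExtCell.R last y) (y last)) := fun y => by
    congr 1; ring
  have Hfix : ∀ y ∈ Ext, (ExtCell.R last y = 0 ∨ y last = ExtCell.R last y ∨
      y last = -ExtCell.R last y - ε) → ∀ t : ℝ,
      ExtCell.V last y ((1 - t) * y last + t * ExtCell.f ε (ExtCell.R last y) (y last)) = y := by
    intro y hy h t
    rw [ExtCell.f_fix hε (hR y) ((hmE y).1 hy).2.2 h]
    have : (1 - t) * y last + t * y last = y last := by ring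
    rw [this, ExtCell.V_self]
  refine ⟨fun z => ExtCell.V last z.1
    ((1 - z.2) * z.1 last + z.2 * ExtCell.f ε (ExtCell.R last z.1) (z.1 last)),
    ?_, ?_, ?_, ?_, ?_, ?_, ?_⟩
  · refine Continuous.continuousOn ?_
    have cf' := cf.comp (continuous_fst (X := EuclideanSpace ℝ (Fin m)) (Y := ℝ))
    have cl' := cl.comp (continuous_fst (X := EuclideanSpace ℝ (Fin m)) (Y := ℝ))
    exact cV.comp (continuous_fst.prodMk
      (((continuous_const.sub continuous_snd).mul cl').add (continuous_snd.mul cf')))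
  · rintro y hy t ⟨ht0, ht1⟩
    obtain ⟨a, b, c⟩ := (hmE y).1 hy
    have h1 := ExtCell.le_f hε (hR y) b
    have h2 : ExtCell.f ε (ExtCell.R last y) (y last) ≤ ExtCell.R last y := ExtCell.f_le
    refine (hmE _).2 ?_
    simp only [ExtCell.q_V, ExtCell.R_V, ExtCell.V_last]
    exact ⟨a, by nlinarith, by nlinarith⟩
  · intro y _
    simp [ExtCell.V_self]
  · intro y hy t _
    exact Hfix y (hfr y hy).1 (hfr y hy).2 t
  · intro y hy t _
    obtain ⟨a, b⟩ := (hmS y).1 hy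
    have := hR y
    exact Hfix y ((hmE y).2 ⟨a, by linarith, by linarith⟩) (Or.inr (Or.inl b)) t
  · ext x
    constructor
    · rintro ⟨y, hy, rfl⟩
      obtain ⟨a, b, c⟩ := (hmD y).1 hy
      refine (hmS _).2 ?_
      simp only [H1, ExtCell.q_V, ExtCell.R_V, ExtCell.V_last]
      exact ⟨a, ExtCell.f_top hε (hR y) b⟩
    · intro hx
      obtain ⟨a, b⟩ := (hmS x).1 hx
      have := hR x
      exact ⟨x, (hmD x).2 ⟨a, by linarith, by linarith⟩,
        Hfix x ((hmE x).2 ⟨a, by linarith, by linarith⟩) (Or.inr (Or.inl b)) 1⟩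
  · refine ⟨{
      toFun := fun y => ⟨ExtCell.V last y.1 (ExtCell.f ε (ExtCell.R last y.1) (y.1 last)), ?_⟩
      invFun := fun y => ⟨ExtCell.V last y.1 (ExtCell.g ε (ExtCell.R last y.1) (y.1 last)), ?_⟩
      left_inv := ?_
      right_inv := ?_
      continuous_toFun := ?_
      continuous_invFun := ?_ }, ?_⟩
    · obtain ⟨a, b, c⟩ := (hmC y.1).1 y.2
      refine (hmE _).2 ?_
      simp only [ExtCell.q_V, ExtCell.R_V, ExtCell.V_last]
      exact ⟨a, ExtCell.le_f hε (hR _) b, ExtCell.f_le⟩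
    · obtain ⟨a, b, c⟩ := (hmE y.1).1 y.2
      refine (hmC _).2 ?_
      simp only [ExtCell.q_V, ExtCell.R_V, ExtCell.V_last]
      exact ⟨a, ExtCell.le_g hε (hR _) b, ExtCell.g_le hε (hR _) c⟩
    · intro y
      obtain ⟨a, b, c⟩ := (hmC y.1).1 y.2
      refine Subtype.ext ?_
      simp only [ExtCell.R_V, ExtCell.V_last, ExtCell.V_V]
      rw [ExtCell.g_f hε (hR _) c, ExtCell.V_self]
    · intro y
      obtain ⟨a, b, c⟩ := (hmE y.1).1 y.2
      refine Subtype.ext ?_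
      simp only [ExtCell.R_V, ExtCell.V_last, ExtCell.V_V]
      rw [ExtCell.f_g hε (hR _) c, ExtCell.V_self]
    · exact Continuous.subtype_mk
        ((cV.comp (continuous_id.prodMk cf)).comp continuous_subtype_val) _
    · exact Continuous.subtype_mk
        ((cV.comp (continuous_id.prodMk cg)).comp continuous_subtype_val) _
    · intro y
      exact (H1 y.1).symm
end

section
/- Let m ≥ 2 and ε > 0. The map H : (S^{m−1}₋ × [0,ε]) × [0,1] → ℝ^m sending ((x₁,…,x_m), δ, t) with (x₁,…,x_m) ∈ S^{m−1}₋ to (x₁, …, x_{m−1}, (x_m − δ) + t·((x_m − δ) + √(1 − x₁² − ⋯ − x_{m−1}²) + ε)·(2·√(1 − x₁² − ⋯ − x_{m−1}²))/ε) is continuous, takes values in Ext = D^m ∪ C_ε where C_ε = {(x₁,…,x_{m−1}, x_m − δ) : (x₁,…,x_m) ∈ S^{m−1}₋, 0 ≤ δ ≤ ε}, agrees at t = 0 with the inclusion of C_ε (parametrized by (x, δ) ↦ (x₁,…,x_{m−1}, x_m − δ)), and for each fixed t ∈ [0,1] is a homeomorphism onto its image; at t = 1 its image is all of Ext. -/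
open scoped BigOperators


namespace CollarAux

variable {m : ℕ}

noncomputable def A (l : Fin m) (x : EuclideanSpace ℝ (Fin m)) : ℝ :=
  ∑ i ∈ Finset.univ.erase l, (x i) ^ 2

noncomputable def U (l : Fin m) (x : EuclideanSpace ℝ (Fin m)) (v : ℝ) :
    EuclideanSpace ℝ (Fin m) :=
  WithLp.toLp 2 (Function.update x.ofLp l v)

lemma U_last (l : Fin m) (x : EuclideanSpace ℝ (Fin m)) (v : ℝ) : U l x v l = v := by
  simp [U]

lemma U_ne (l : Fin m) (x : EuclideanSpace ℝ (Fin m)) (v : ℝ) {i : Fin m} (h : i ≠ l) :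
    U l x v i = x i := by
  simp [U, h]

lemma ext_last (l : Fin m) {x y : EuclideanSpace ℝ (Fin m)} (h1 : ∀ i, i ≠ l → x i = y i)
    (h2 : x l = y l) : x = y := by
  ext i
  by_cases h : i = l
  · subst h; exact h2
  · exact h1 i h

lemma A_congr (l : Fin m) {x y : EuclideanSpace ℝ (Fin m)} (h1 : ∀ i, i ≠ l → x i = y i) :
    A l x = A l y := by
  unfold A
  refine Finset.sum_congr rfl fun i hi => ?_
  rw [h1 i (Finset.ne_of_mem_erase hi)]

lemma A_U (l : Fin m) (x : EuclideanSpace ℝ (Fin m)) (v : ℝ) : A l (U l x v) = A l x :=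
  A_congr l fun _ h => U_ne l x v h

lemma A_cont (l : Fin m) : Continuous (A l) := by
  unfold A; fun_prop

lemma normsq (l : Fin m) (x : EuclideanSpace ℝ (Fin m)) : ‖x‖ ^ 2 = A l x + (x l) ^ 2 := by
  rw [EuclideanSpace.real_norm_sq_eq, A, Finset.sum_erase_add _ _ (Finset.mem_univ l)]

lemma mem_S (l : Fin m) (x : EuclideanSpace ℝ (Fin m)) :
    (‖x‖ = 1 ∧ x l ≤ 0) ↔ (A l x ≤ 1 ∧ x l = -Real.sqrt (1 - A l x)) := by
  have hn := normsq l x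
  constructor
  · rintro ⟨h1, h2⟩
    rw [h1] at hn
    refine ⟨by nlinarith [sq_nonneg (x l)], ?_⟩
    have : 1 - A l x = (-x l) ^ 2 := by linarith
    rw [this, Real.sqrt_sq (by linarith)]; ring
  · rintro ⟨h1, h2⟩
    have hs := Real.sqrt_nonneg (1 - A l x)
    have hq := Real.sq_sqrt (show 0 ≤ 1 - A l x by linarith)
    refine ⟨?_, by linarith⟩
    rw [h2] at hn
    have : ‖x‖ ^ 2 = 1 := by rw [hn]; linarith
    nlinarith [norm_nonneg x]

lemma mem_D (l : Fin m) (x : EuclideanSpace ℝ (Fin m)) :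
    ‖x‖ ≤ 1 ↔ (A l x ≤ 1 ∧ -Real.sqrt (1 - A l x) ≤ x l ∧ x l ≤ Real.sqrt (1 - A l x)) := by
  have hn := normsq l x
  rw [← abs_le]
  constructor
  · intro h
    have : ‖x‖ ^ 2 ≤ 1 := by nlinarith [norm_nonneg x]
    exact ⟨by nlinarith [sq_nonneg (x l)], Real.abs_le_sqrt (by linarith)⟩
  · rintro ⟨h1, h2⟩
    have hq := Real.sq_sqrt (show 0 ≤ 1 - A l x by linarith)
    have h3 : (x l) ^ 2 ≤ 1 - A l x := by
      rw [← hq, ← sq_abs]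
      exact pow_le_pow_left₀ (abs_nonneg _) h2 2
    nlinarith [norm_nonneg x]

lemma mem_Ext (l : Fin m) (ε : ℝ) (hε : 0 < ε) (y : EuclideanSpace ℝ (Fin m)) :
    (‖y‖ ≤ 1 ∨ ∃ x, (‖x‖ = 1 ∧ x l ≤ 0) ∧ ∃ δ : ℝ, 0 ≤ δ ∧ δ ≤ ε ∧ y = U l x (x l - δ)) ↔
    (A l y ≤ 1 ∧ -Real.sqrt (1 - A l y) - ε ≤ y l ∧ y l ≤ Real.sqrt (1 - A l y)) := by
  have hs := Real.sqrt_nonneg (1 - A l y)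
  constructor
  · rintro (h | ⟨x, hx, δ, h0, h1, rfl⟩)
    · obtain ⟨a, b, c⟩ := (mem_D l y).1 h
      exact ⟨a, by linarith, c⟩
    · rw [A_U] at *
      rw [U_last]
      obtain ⟨a, b⟩ := (mem_S l x).1 hx
      exact ⟨a, by linarith, by linarith⟩
  · rintro ⟨a, b, c⟩
    by_cases h : -Real.sqrt (1 - A l y) ≤ y l
    · exact Or.inl ((mem_D l y).2 ⟨a, h, c⟩)
    · push Not at h
      refine Or.inr ⟨U l y (-Real.sqrt (1 - A l y)), (mem_S l _).2 ?_,
        -Real.sqrt (1 - A l y) - y l, by linarith, by linarith, ?_⟩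
      · rw [A_U, U_last]; exact ⟨a, rfl⟩
      · refine ext_last l (fun i hi => by rw [U_ne l _ _ hi, U_ne l _ _ hi]) ?_
        rw [U_last, U_last]; ring

end CollarAux

open CollarAux in
/-- For `m ≥ 2`, `ε > 0`, the explicit collar homotopy
`H((x₁,…,x_m), δ, t) = (x₁,…,x_{m−1}, (x_m−δ) + t((x_m−δ) + √(1−x₁²−⋯−x_{m−1}²) + ε)·
(2√(1−x₁²−⋯−x_{m−1}²))/ε)` on `S^{m−1}₋ × [0,ε]` is continuous, takes values in the
extended cell `Ext = D^m ∪ C_ε`, agrees at `t = 0` with the inclusion of the collar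
`C_ε` (parametrized by `(x,δ) ↦ (x₁,…,x_{m−1}, x_m − δ)`), is for each fixed `t` a
homeomorphism onto its image, and at `t = 1` has image all of `Ext`. -/
theorem collar_homotopy (m : ℕ) (hm : 2 ≤ m) (ε : ℝ) (hε : 0 < ε) :
    ∀ last : Fin m, last = ⟨m - 1, by omega⟩ →
    ∀ D : Set (EuclideanSpace ℝ (Fin m)), D = {x | ‖x‖ ≤ 1} →
    ∀ Sminus : Set (EuclideanSpace ℝ (Fin m)), Sminus = {x | ‖x‖ = 1 ∧ x last ≤ 0} →
    ∀ C : Set (EuclideanSpace ℝ (Fin m)),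
      C = {y | ∃ x ∈ Sminus, ∃ δ : ℝ, 0 ≤ δ ∧ δ ≤ ε ∧
            y = WithLp.toLp 2 (Function.update x.ofLp last (x last - δ))} →
    ∀ Ext : Set (EuclideanSpace ℝ (Fin m)), Ext = D ∪ C →
    ∀ K : Set (EuclideanSpace ℝ (Fin m) × ℝ), K = Sminus ×ˢ Set.Icc (0 : ℝ) ε →
    ∀ H : (EuclideanSpace ℝ (Fin m) × ℝ) × ℝ → EuclideanSpace ℝ (Fin m),
      (H = fun q => WithLp.toLp 2 (Function.update q.1.1.ofLp last
        ((q.1.1 last - q.1.2) +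
          q.2 * ((q.1.1 last - q.1.2) +
              Real.sqrt (1 - ∑ i ∈ Finset.univ.erase last, (q.1.1 i) ^ 2) + ε) *
            (2 * Real.sqrt (1 - ∑ i ∈ Finset.univ.erase last, (q.1.1 i) ^ 2)) / ε))) →
    ContinuousOn H (K ×ˢ Set.Icc (0 : ℝ) 1) ∧
    (∀ p ∈ K, ∀ t ∈ Set.Icc (0 : ℝ) 1, H (p, t) ∈ Ext) ∧
    (∀ p ∈ K, H (p, 0) = WithLp.toLp 2 (Function.update p.1.ofLp last (p.1 last - p.2))) ∧
    (∀ t ∈ Set.Icc (0 : ℝ) 1,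
      ∃ e : K ≃ₜ {y : EuclideanSpace ℝ (Fin m) | ∃ p ∈ K, H (p, t) = y},
        ∀ p : K, (e p : EuclideanSpace ℝ (Fin m)) = H (p.val, t)) ∧
    {y : EuclideanSpace ℝ (Fin m) | ∃ p ∈ K, H (p, 1) = y} = Ext := by
  intro l _ D hD S hS C hC Ext hExt K hK H hH
  have hH' : ∀ x δ t, H ((x, δ), t) = U l x ((x l - δ) + t * ((x l - δ) +
      Real.sqrt (1 - A l x) + ε) * (2 * Real.sqrt (1 - A l x)) / ε) := by
    intro x δ t; rw [hH]; rfl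
  have hE : ∀ y, y ∈ Ext ↔
      (A l y ≤ 1 ∧ -Real.sqrt (1 - A l y) - ε ≤ y l ∧ y l ≤ Real.sqrt (1 - A l y)) := by
    intro y
    rw [← mem_Ext l ε hε y, hExt, hC, hD, hS]; rfl
  have hKm : ∀ x δ, (x, δ) ∈ K ↔
      ((A l x ≤ 1 ∧ x l = -Real.sqrt (1 - A l x)) ∧ 0 ≤ δ ∧ δ ≤ ε) := by
    intro x δ
    rw [← mem_S l x, hK, hS]; rfl
  have hcont : Continuous H := by
    have : H = fun q => U l q.1.1 ((q.1.1 l - q.1.2) + q.2 * ((q.1.1 l - q.1.2) +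
      Real.sqrt (1 - A l q.1.1) + ε) * (2 * Real.sqrt (1 - A l q.1.1)) / ε) := by
      funext q; exact hH' q.1.1 q.1.2 q.2
    rw [this]
    have hA := A_cont l
    unfold U
    refine (PiLp.continuous_toLp 2 _).comp (Continuous.update (by fun_prop) l ?_)
    fun_prop
  have hval : ∀ x δ t, (x, δ) ∈ K → H ((x, δ), t) = U l x (-Real.sqrt (1 - A l x) - δ +
      t * (ε - δ) * (2 * Real.sqrt (1 - A l x)) / ε) := by
    intro x δ t h
    obtain ⟨⟨a, b⟩, c, d⟩ := (hKm x δ).1 h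
    rw [hH', b]; congr 1; ring
  have hmap : ∀ p ∈ K, ∀ t ∈ Set.Icc (0 : ℝ) 1, H (p, t) ∈ Ext := by
    rintro ⟨x, δ⟩ hp t ⟨ht0, ht1⟩
    rw [hval x δ t hp, hE, A_U, U_last]
    obtain ⟨⟨a, b⟩, c, d⟩ := (hKm x δ).1 hp
    have hs := Real.sqrt_nonneg (1 - A l x)
    set s := Real.sqrt (1 - A l x)
    have h1 : 0 ≤ t * (ε - δ) * (2 * s) / ε := by
      have : 0 ≤ ε - δ := by linarith
      positivity
    have h2 : t * (ε - δ) * (2 * s) / ε ≤ 2 * s := by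
      rw [div_le_iff₀ hε]
      have : t * (ε - δ) ≤ ε := by nlinarith
      nlinarith
    exact ⟨a, by linarith, by linarith⟩
  have hKc : IsCompact K := by
    rw [hK]
    refine IsCompact.prod ?_ isCompact_Icc
    have : S = Metric.sphere 0 1 ∩ {x | x l ≤ 0} := by
      rw [hS]; ext x; simp
    rw [this]
    exact (isCompact_sphere _ _).inter_right (isClosed_le (by fun_prop) continuous_const)
  refine ⟨hcont.continuousOn, hmap, ?_, ?_, ?_⟩
  · rintro ⟨x, δ⟩ hp
    rw [hH']; simp [U]
  · intro t ht
    have hinj : ∀ p ∈ K, ∀ q ∈ K, H (p, t) = H (q, t) → p = q := by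
      rintro ⟨x, δ⟩ hp ⟨x', δ'⟩ hq heq
      rw [hval x δ t hp, hval x' δ' t hq] at heq
      obtain ⟨⟨a, b⟩, c, d⟩ := (hKm x δ).1 hp
      obtain ⟨⟨a', b'⟩, c', d'⟩ := (hKm x' δ').1 hq
      have h1 : ∀ i, i ≠ l → x i = x' i := by
        intro i hi
        have := congrArg (fun z : EuclideanSpace ℝ (Fin m) => z i) heq
        simpa only [U_ne l _ _ hi] using this
      have hA := A_congr l h1
      have hx : x = x' := ext_last l h1 (by rw [b, b', hA])
      subst hx
      have h2 := congrArg (fun z : EuclideanSpace ℝ (Fin m) => z l) heq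
      simp only [U_last] at h2
      have hs := Real.sqrt_nonneg (1 - A l x)
      set s := Real.sqrt (1 - A l x)
      have h3 : (δ - δ') * (1 + t * (2 * s) / ε) = 0 := by
        have e1 : t * (ε - δ) * (2 * s) / ε = (ε - δ) * (t * (2 * s) / ε) := by ring
        have e2 : t * (ε - δ') * (2 * s) / ε = (ε - δ') * (t * (2 * s) / ε) := by ring
        rw [e1, e2] at h2
        linarith
      have h4 : 0 < 1 + t * (2 * s) / ε := by
        have := ht.1
        positivity
      have h5 : δ = δ' := by
        rcases mul_eq_zero.1 h3 with h | h
        · linarith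
        · linarith
      rw [h5]
    haveI : CompactSpace K := isCompact_iff_compactSpace.1 hKc
    let f : K → {y : EuclideanSpace ℝ (Fin m) | ∃ p ∈ K, H (p, t) = y} :=
      fun p => ⟨H (p.val, t), p.val, p.property, rfl⟩
    have hf : Function.Bijective f := by
      constructor
      · intro p q h
        exact Subtype.ext (hinj _ p.2 _ q.2 (congrArg Subtype.val h))
      · rintro ⟨y, p, hp, h⟩
        exact ⟨⟨p, hp⟩, Subtype.ext h⟩
    have hfc : Continuous f := by
      refine Continuous.subtype_mk ?_ _
      fun_prop
    exact ⟨Continuous.homeoOfEquivCompactToT2 (f := Equiv.ofBijective f hf) hfc, fun p => rfl⟩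
  · ext y
    constructor
    · rintro ⟨p, hp, rfl⟩
      exact hmap p hp 1 ⟨by norm_num, le_rfl⟩
    · intro hy
      obtain ⟨a, b, c⟩ := (hE y).1 hy
      have hs := Real.sqrt_nonneg (1 - A l y)
      obtain ⟨s, hsd⟩ : ∃ s, s = Real.sqrt (1 - A l y) := ⟨_, rfl⟩
      rw [← hsd] at hs b c
      have hpos : 0 < ε + 2 * s := by linarith
      have hmem : (U l y (-s), (s - y l) * ε / (ε + 2 * s)) ∈ K := by
        rw [hKm, A_U, U_last, ← hsd]
        refine ⟨⟨a, rfl⟩, ?_, ?_⟩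
        · have : 0 ≤ s - y l := by linarith
          positivity
        · rw [div_le_iff₀ hpos]; nlinarith
      refine ⟨_, hmem, ?_⟩
      rw [hval _ _ _ hmem]
      refine ext_last l (fun i hi => by rw [U_ne l _ _ hi, U_ne l _ _ hi]) ?_
      rw [U_last, A_U, ← hsd]
      field_simp
      ring
end
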